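/- Let n ≥ 2 be an integer, Γ = ℝ × {0, 1, …, n−1}, and let Λ ⊂ ℝ² be a closed set that is 2-periodic with respect to the second variable. Suppose (Γ, Λ) is a Heisenberg uniqueness pair. Then for every l ≥ 1 and every choice of integers 1 ≤ α_1 < α_2 < ⋯ < α_l ≤ n−1, there is no nonempty open interval J ⊂ ℝ such that J ∩ Π(Λ) is nonempty and J ∩ Π(Λ) ⊂ ⋃_{j=1}^{l} Π^{α_j*}_{ne}(Λ). -/

import Mathlib

open MeasureTheory Complex

/-- Fourier transform with the convention `f̂(ξ) = ∫ e^{πixξ} f(x) dx`. -/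
noncomputable def FT (f : ℝ → ℂ) (ξ : ℝ) : ℂ :=
  ∫ x : ℝ, Complex.exp (Real.pi * Complex.I * x * ξ) * f x

/-- `e^{πiη}`. -/
noncomputable def cexpEta (η : ℝ) : ℂ := Complex.exp (Real.pi * Complex.I * η)

/-- `Λ` is 2-periodic with respect to the second variable. -/
def Periodic2 (Λ : Set (ℝ × ℝ)) : Prop :=
  ∀ ξ η : ℝ, (ξ, η) ∈ Λ ↔ (ξ, η + 2) ∈ Λ

/-- The projection `Π(Λ)` of `Λ` on the x-axis. -/
def proj (Λ : Set (ℝ × ℝ)) : Set ℝ := {ξ | ∃ η : ℝ, (ξ, η) ∈ Λ}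

/-- `Img(ξ) = {η ∈ [0,2) : (ξ,η) ∈ Λ}`. -/
def Img (Λ : Set (ℝ × ℝ)) (ξ : ℝ) : Set ℝ := {η | η ∈ Set.Ico (0 : ℝ) 2 ∧ (ξ, η) ∈ Λ}

/-- `Π^k(Λ)` for `k < n`: points of `Π(Λ)` whose `Img` has exactly `k` elements. -/
def projExact (Λ : Set (ℝ × ℝ)) (k : ℕ) : Set ℝ :=
  {ξ | ξ ∈ proj Λ ∧ (Img Λ ξ).encard = k}

/-- `Π^n(Λ)`: points of `Π(Λ)` whose `Img` has at least `n` elements. -/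
def projAtLeast (Λ : Set (ℝ × ℝ)) (n : ℕ) : Set ℝ :=
  {ξ | ξ ∈ proj Λ ∧ (n : ℕ∞) ≤ (Img Λ ξ).encard}

/-- `ψ ∈ P^{E,ξ}_l` : there are an open interval `I ∋ ξ` and `φ_1,…,φ_{l-1} ∈ L¹(ℝ)` with
`φ̂_1 + φ̂_2 ψ + ⋯ + φ̂_{l-1} ψ^{l-2} + ψ^{l-1} = 0` on `I ∩ E`. -/
def Pmem (E : Set ℝ) (ξ : ℝ) (l : ℕ) (ψ : ℝ → ℂ) : Prop :=
  ∃ a b : ℝ, ξ ∈ Set.Ioo a b ∧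
    ∃ φ : Fin (l - 1) → ℝ → ℂ, (∀ i, Integrable (φ i)) ∧
      ∀ x ∈ Set.Ioo a b ∩ E,
        (∑ i : Fin (l - 1), FT (φ i) x * ψ x ^ (i : ℕ)) + ψ x ^ (l - 1) = 0

/-- `Π^{1*}(Λ)`: those `ξ ∈ Π^1(Λ)` such that `χ ∈ P^{Π^1(Λ),ξ}_n`, where
`χ(ξ') = e^{πiη}` with `η` the unique element of `Img(ξ')`. -/
def projOneStar (Λ : Set (ℝ × ℝ)) (n : ℕ) : Set ℝ :=
  {ξ | ξ ∈ projExact Λ 1 ∧ ∃ χ : ℝ → ℂ,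
    (∀ ξ' ∈ projExact Λ 1, ∀ η ∈ Img Λ ξ', χ ξ' = cexpEta η) ∧
    Pmem (projExact Λ 1) ξ n χ}

/-- `Π^{k*}_{su}(Λ)`. -/
def projStarSu (Λ : Set (ℝ × ℝ)) (n k : ℕ) : Set ℝ :=
  {ξ | ξ ∈ projExact Λ k ∧ ∃ a b : ℝ, ξ ∈ Set.Ioo a b ∧
    ∃ φ : Fin (n - 1) → ℝ → ℂ, (∀ i, Integrable (φ i)) ∧
      ∀ ξ' ∈ Set.Ioo a b ∩ projExact Λ k, ∀ η ∈ Img Λ ξ',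
        (∑ i : Fin (n - 1), FT (φ i) ξ' * cexpEta η ^ (i : ℕ)) = -(cexpEta η ^ (n - 1))}

/-- `Π^{k*}_{ne}(Λ)` for `k ≥ 2`. -/
def projStarNe (Λ : Set (ℝ × ℝ)) (k : ℕ) : Set ℝ :=
  {ξ | ξ ∈ projExact Λ k ∧ ∃ a b : ℝ, ξ ∈ Set.Ioo a b ∧
    ∃ φ : Fin k → ℝ → ℂ, (∀ i, Integrable (φ i)) ∧
      ∀ ξ' ∈ Set.Ioo a b ∩ projExact Λ k, ∀ η ∈ Img Λ ξ',
        (∑ i : Fin k, FT (φ i) ξ' * cexpEta η ^ (i : ℕ)) = -(cexpEta η ^ k)}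

/-- `(Γ, Λ)` with `Γ = ℝ × {0,…,n-1}` is a Heisenberg uniqueness pair: every admissible
measure `μ = Σ_m (x ↦ (x,m))_*(f_m dx)` (with each `f_m ∈ L¹(ℝ)`) whose Fourier transform
`μ̂(ξ,η) = Σ_m e^{mπiη} f̂_m(ξ)` vanishes on `Λ` must be zero, i.e. each `f_m = 0` a.e. -/
def IsHUP (n : ℕ) (Λ : Set (ℝ × ℝ)) : Prop :=
  ∀ f : Fin n → ℝ → ℂ, (∀ m, Integrable (f m)) →
    (∀ ξ η : ℝ, (ξ, η) ∈ Λ → ∑ m : Fin n, cexpEta η ^ (m : ℕ) * FT (f m) ξ = 0) →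
    ∀ m, f m =ᵐ[volume] (0 : ℝ → ℂ)

/-- `Π^{k*}_{ne}(Λ)` including the convention `Π^{1*}_{ne}(Λ) := Π^{1*}(Λ)`. -/
def projStarNeGen (Λ : Set (ℝ × ℝ)) (n k : ℕ) : Set ℝ :=
  if k = 1 then projOneStar Λ n else projStarNe Λ k

/-! Let `k ≥ 2` and fix `ξ₀ ∈ Π^k` near which the values `e^{πiη}` over `Π^k` are the roots of a
monic polynomial of degree `k` whose coefficients are Fourier transforms, hence continuous. The `k`
roots at `ξ₀` are distinct, so over nearby points of `Π^k` there is a root close to each of them. As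
`Λ` is closed this survives in the limit: over nearby points of the closure of `Π^k`, the fibres
have at least `k` elements. For `k = 1` this bound holds at every point of `Π(Λ)`.

Suppose that the fibres over an open set `U` have at most `k` elements, with `k` minimal after
shrinking `U`. By minimality `Π^k` is dense in `U`, so near any of its points every nonempty fibre
has exactly `k` elements and the polynomial relation holds on all of `Λ` over an open interval.
Multiplying its coefficients by a bump function turns it into a nonzero admissible measure whose
Fourier transform vanishes on `Λ`. -/

open Polynomial Metric
open scoped FourierTransform Topology NNReal

section Polynomial

/-- The monic polynomial `X^m + c_{m-1} X^{m-1} + ⋯ + c_0`, encoding the left-hand side of the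
polynomial relations that define `Π^{k*}`. -/
noncomputable def monicOfCoeffs {R : Type*} [Semiring R] {m : ℕ} (c : Fin m → R) : R[X] :=
  X ^ m + ∑ i, C (c i) * X ^ (i : ℕ)

lemma monic_monicOfCoeffs {R : Type*} [Semiring R] {m : ℕ} (c : Fin m → R) :
    (monicOfCoeffs c).Monic :=
  monic_X_pow_add (degree_sum_fin_lt c)

lemma natDegree_monicOfCoeffs {R : Type*} [Semiring R] [Nontrivial R] {m : ℕ} (c : Fin m → R) :
    (monicOfCoeffs c).natDegree = m :=
  natDegree_eq_of_degree_eq_some <| by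
    rw [monicOfCoeffs, degree_add_eq_left_of_degree_lt] <;> simp [degree_sum_fin_lt]

lemma eval_monicOfCoeffs {R : Type*} [CommSemiring R] {m : ℕ} (c : Fin m → R) (z : R) :
    (monicOfCoeffs c).eval z = z ^ m + ∑ i, c i * z ^ (i : ℕ) := by
  simp [monicOfCoeffs, eval_finsetSum]

lemma eq_prod_X_sub_C_of_card_eq_natDegree {R : Type*} [CommRing R] [IsDomain R] {P : R[X]}
    (hP : P.Monic) {s : Finset R} (hs : s.card = P.natDegree) (hroot : ∀ w ∈ s, P.IsRoot w) :
    P = ∏ w ∈ s, (X - C w) := by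
  have hdeg : P.degree = s.card := by rw [hs, degree_eq_natDegree hP.ne_zero]
  refine eq_of_degree_le_of_eval_finset_eq s hdeg.le (by simp [hdeg, degree_prod]) ?_ ?_
  · rw [hP.leadingCoeff, (monic_prod_X_sub_C (fun w ↦ w) s).leadingCoeff]
  · intro w hw
    rw [hroot w hw, eval_prod, Finset.prod_eq_zero hw (by simp)]

lemma exists_dist_lt_of_norm_eval_lt {𝕜 : Type*} [NormedField 𝕜] {P : 𝕜[X]} (hP : P.Monic)
    {s : Set 𝕜} (hs : s.encard = P.natDegree) (hroot : ∀ w ∈ s, P.IsRoot w) {z : 𝕜} {ε : ℝ}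
    (hε : 0 ≤ ε) (hz : ‖P.eval z‖ < ε ^ P.natDegree) : ∃ w ∈ s, dist z w < ε := by
  obtain ⟨t, rfl⟩ := (Set.finite_of_encard_eq_coe hs).exists_finset_coe
  replace hs : t.card = P.natDegree := by simpa using hs
  contrapose! hz
  calc ε ^ P.natDegree = ∏ _w ∈ t, ε := by rw [Finset.prod_const, hs]
    _ ≤ ∏ w ∈ t, dist z w := Finset.prod_le_prod (fun _ _ ↦ hε) hz
    _ = ‖P.eval z‖ := by
      rw [eq_prod_X_sub_C_of_card_eq_natDegree hP hs hroot, eval_prod, norm_prod]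
      simp [dist_eq_norm]

end Polynomial

section Fibres

lemma exists_isSeparated_of_finite {X : Type*} [EMetricSpace X] {s : Set X} (hs : s.Finite) :
    ∃ ε : ℝ≥0, 0 < ε ∧ IsSeparated ε s := by
  obtain ⟨ε, hε, hεs⟩ := ENNReal.lt_iff_exists_nnreal_btwn.1 hs.einfsep_pos
  exact ⟨ε, by exact_mod_cast hε,
    fun x hx y hy hxy ↦ hεs.trans_le (Set.einfsep_le_edist_of_mem hx hy hxy)⟩

lemma encard_le_encard_of_isSeparated_of_isCover {X : Type*} [PseudoEMetricSpace X] {ε : ℝ≥0}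
    {s t : Set X} (hs : IsSeparated (2 * ε) s) (ht : IsCover ε s t) : s.encard ≤ t.encard :=
  calc s.encard ≤ packingNumber (2 * ε) s := by
        apply IsSeparated.encard_le_packingNumber subset_rfl
        exact_mod_cast hs
    _ ≤ externalCoveringNumber ε s := packingNumber_two_mul_le_externalCoveringNumber ε s
    _ ≤ t.encard := ht.externalCoveringNumber_le_encard

lemma isClosed_setOf_isCover {X Y : Type*} [TopologicalSpace X] [PseudoMetricSpace Y]
    {Z : X → Set Y} (hZ : UpperHemicontinuous Z) (ε : ℝ≥0) (s : Set Y) :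
    IsClosed {x | IsCover ε s (Z x)} := by
  have hcover : {x | IsCover ε s (Z x)} = ⋂ y ∈ s, {x | (Z x ∩ closedBall y ε).Nonempty} := by
    ext x
    simp [isCover_iff_subset_iUnion_closedBall, Set.subset_def, Set.Nonempty, dist_comm]
  rw [hcover]
  exact isClosed_biInter fun y _ ↦ (hZ.inter isClosed_closedBall).isClosed_domain

variable {X 𝕜 : Type*} [TopologicalSpace X] [NormedField 𝕜] {Z : X → Set 𝕜} {k : ℕ}
  {P : X → 𝕜[X]} {x₀ : X}

lemma eventually_isCover_of_isRoot (hmonic : ∀ x, (P x).Monic) (hdeg : ∀ x, (P x).natDegree = k)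
    (hcont : ∀ z, ContinuousAt (fun x ↦ (P x).eval z) x₀) (hx₀ : (Z x₀).encard = k)
    (hroot : ∀ᶠ x in 𝓝 x₀, (Z x).encard = k → ∀ z ∈ Z x, (P x).IsRoot z)
    {ε : ℝ≥0} (hε : 0 < ε) :
    ∀ᶠ x in 𝓝 x₀, (Z x).encard = k → IsCover ε (Z x₀) (Z x) := by
  have hsmall : ∀ᶠ x in 𝓝 x₀, ∀ z ∈ Z x₀, ‖(P x).eval z‖ < (ε : ℝ) ^ k := by
    rw [Filter.eventually_all_finite (Set.finite_of_encard_eq_coe hx₀)]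
    intro z hz
    have hz_root : (P x₀).eval z = 0 := hroot.self_of_nhds hx₀ z hz
    have hz_lt : ‖(P x₀).eval z‖ < (ε : ℝ) ^ k := by
      rw [hz_root, norm_zero]
      positivity
    exact (hcont z).norm.eventually_lt_const hz_lt
  filter_upwards [hroot, hsmall] with x hrootx hsmallx hx
  rw [isCover_iff_subset_iUnion_closedBall]
  intro z hz
  obtain ⟨w, hw, hzw⟩ := exists_dist_lt_of_norm_eval_lt (hmonic x) (by rw [hx, hdeg])
    (hrootx hx) ε.coe_nonneg (by rw [hdeg]; exact hsmallx z hz)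
  exact Set.mem_biUnion hw hzw.le

theorem eventually_le_encard_of_mem_closure (hZ : UpperHemicontinuous Z)
    (hmonic : ∀ x, (P x).Monic) (hdeg : ∀ x, (P x).natDegree = k)
    (hcont : ∀ z, ContinuousAt (fun x ↦ (P x).eval z) x₀) (hx₀ : (Z x₀).encard = k)
    (hroot : ∀ᶠ x in 𝓝 x₀, (Z x).encard = k → ∀ z ∈ Z x, (P x).IsRoot z) :
    ∀ᶠ x in 𝓝 x₀, x ∈ closure {x | (Z x).encard = k} → k ≤ (Z x).encard := by
  obtain ⟨δ, hδ, hsep⟩ := exists_isSeparated_of_finite (Set.finite_of_encard_eq_coe hx₀)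
  have hcover := eventually_isCover_of_isRoot hmonic hdeg hcont hx₀ hroot (half_pos hδ)
  filter_upwards [hcover.eventually_nhds] with x hcoverx hx
  have hfreq : ∃ᶠ y in 𝓝 x, IsCover (δ / 2) (Z x₀) (Z y) :=
    ((mem_closure_iff_frequently.1 hx).and_eventually hcoverx).mono fun y hy ↦ hy.2 hy.1
  have hcover_x : IsCover (δ / 2) (Z x₀) (Z x) :=
    (isClosed_setOf_isCover hZ (δ / 2) (Z x₀)).closure_subset
      (mem_closure_iff_frequently.2 hfreq)
  have hδ2 : 2 * ((δ / 2 : ℝ≥0) : ENNReal) = δ := by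
    exact_mod_cast mul_div_cancel₀ δ two_ne_zero
  rw [← hx₀]
  exact encard_le_encard_of_isSeparated_of_isCover (by rwa [hδ2]) hcover_x

lemma upperHemicontinuous_image_fibre {X Y Z : Type*} [TopologicalSpace X] [TopologicalSpace Y]
    [TopologicalSpace Z] {Λ : Set (X × Y)} (hΛ : IsClosed Λ) {K : Set Y} (hK : IsCompact K)
    {g : Y → Z} (hg : Continuous g) :
    UpperHemicontinuous fun x ↦ g '' {y | y ∈ K ∧ (x, y) ∈ Λ} := by
  rw [upperHemicontinuous_iff_isClosed_compl_preimage_Iic_compl]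
  intro B hB
  have := isCompact_iff_compactSpace.1 hK
  have hclosed : IsClosed {p : X × K | (p.1, (p.2 : Y)) ∈ Λ ∧ g p.2 ∈ B} :=
    (hΛ.preimage (by fun_prop : Continuous fun p : X × K ↦ (p.1, (p.2 : Y)))).inter
      (hB.preimage (by fun_prop : Continuous fun p : X × K ↦ g p.2))
  convert isClosedMap_fst_of_compactSpace _ hclosed using 1
  ext x
  simp only [Set.mem_compl_iff, Set.mem_preimage, Set.mem_Iic, Set.not_subset, Set.mem_image,
    Set.mem_ofPred_eq, Prod.exists, Subtype.exists]
  grind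

end Fibres

section FourierTransform

lemma FT_eq_fourier (f : ℝ → ℂ) (ξ : ℝ) : FT f ξ = 𝓕 f (-ξ / 2) := by
  rw [Real.fourier_real_eq_integral_exp_smul, FT]
  congr 1 with x
  rw [smul_eq_mul]
  congr 2
  push_cast
  ring

lemma continuous_FT {f : ℝ → ℂ} (hf : Integrable f) : Continuous (FT f) := by
  have hfourier : Continuous (𝓕 f) :=
    VectorFourier.fourierIntegral_continuous Real.continuous_fourierChar continuous_inner hf
  rw [funext (FT_eq_fourier f)]
  exact hfourier.comp (by fun_prop)

lemma FT_eq_zero_of_ae_eq_zero {f : ℝ → ℂ} (hf : f =ᵐ[volume] 0) (ξ : ℝ) : FT f ξ = 0 := by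
  refine integral_eq_zero_of_ae ?_
  filter_upwards [hf] with x hx
  simp [hx]

lemma exists_integrable_FT_eq_mul {f g : ℝ → ℂ} (hf : Integrable f) (hg : Integrable g) :
    ∃ h : ℝ → ℂ, Integrable h ∧ ∀ ξ, FT h ξ = FT f ξ * FT g ξ := by
  refine ⟨_, hf.integrable_convolution (ContinuousLinearMap.mul ℂ ℂ) hg, fun ξ ↦ ?_⟩
  simp only [FT_eq_fourier, Real.fourier_mul_convolution_eq hf hg]

lemma exists_integrable_FT_eq_of_contDiff {v : ℝ → ℂ} (hv : HasCompactSupport v)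
    (hsmooth : ContDiff ℝ (⊤ : ℕ∞) v) :
    ∃ g : ℝ → ℂ, Integrable g ∧ ∀ ξ, FT g ξ = v (-ξ / 2) := by
  let S : SchwartzMap ℝ ℂ := hv.toSchwartzMap hsmooth
  refine ⟨(𝓕⁻ S : SchwartzMap ℝ ℂ), SchwartzMap.integrable _, fun ξ ↦ ?_⟩
  rw [FT_eq_fourier, ← SchwartzMap.fourier_coe, FourierTransform.fourier_fourierInv_eq]
  rfl

lemma exists_integrable_FT_bump {U : Set ℝ} {ξ₀ : ℝ} (hU : U ∈ 𝓝 ξ₀) :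
    ∃ g : ℝ → ℂ, Integrable g ∧ (∀ ξ ∉ U, FT g ξ = 0) ∧ FT g ξ₀ = 1 := by
  have hV : (fun t : ℝ ↦ -2 * t) ⁻¹' U ∈ 𝓝 (-ξ₀ / 2) :=
    (by fun_prop : Continuous fun t : ℝ ↦ -2 * t).continuousAt.preimage_mem_nhds
      (by convert hU using 2; ring)
  obtain ⟨u, hu_supp, hu_compact, hu_smooth, -, hu_one⟩ :=
    exists_contDiff_tsupport_subset (n := ⊤) hV
  obtain ⟨g, hg, hFT⟩ := exists_integrable_FT_eq_of_contDiff (v := fun t ↦ (u t : ℂ))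
    (hu_compact.comp_left Complex.ofReal_zero) (Complex.ofRealCLM.contDiff.comp hu_smooth)
  refine ⟨g, hg, fun ξ hξ ↦ ?_, by rw [hFT, hu_one, Complex.ofReal_one]⟩
  have hnotMem : -ξ / 2 ∉ tsupport u := fun h ↦ hξ (by
    have := hu_supp h
    rwa [Set.mem_preimage, show -2 * (-ξ / 2) = ξ by ring] at this)
  rw [hFT, image_eq_zero_of_notMem_tsupport hnotMem, Complex.ofReal_zero]

end FourierTransform

lemma continuous_cexpEta : Continuous cexpEta := by
  unfold cexpEta
  fun_prop

lemma periodic_cexpEta : Function.Periodic cexpEta 2 := fun η ↦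
  Complex.exp_eq_exp_iff_exists_int.2 ⟨1, by push_cast; ring⟩

lemma injOn_cexpEta : Set.InjOn cexpEta (Set.Ico 0 2) := by
  intro x hx y hy hxy
  obtain ⟨k, hk⟩ := Complex.exp_eq_exp_iff_exists_int.1 hxy
  have hpi : (Real.pi : ℂ) * I ≠ 0 := by simp [Real.pi_ne_zero]
  have hxyk : x = y + 2 * k := by
    have : (x : ℂ) = y + 2 * k := mul_left_cancel₀ hpi (by rw [hk]; ring)
    exact_mod_cast this
  have hk_lt : k < 1 := by exact_mod_cast (by linarith [hx.2, hy.1] : (k : ℝ) < 1)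
  have hk_gt : -1 < k := by exact_mod_cast (by linarith [hx.1, hy.2] : (-1 : ℝ) < k)
  obtain rfl : k = 0 := by omega
  simpa using hxyk

/-- The values `e^{πiη}` over the fibre of `Λ` at `ξ`. Passing from `Img Λ ξ` to the unit circle
makes the fibres vary upper hemicontinuously and does not change their cardinality. -/
def phases (Λ : Set (ℝ × ℝ)) (ξ : ℝ) : Set ℂ := cexpEta '' Img Λ ξ

section Phases

variable {Λ : Set (ℝ × ℝ)} {ξ : ℝ}

lemma encard_phases (Λ : Set (ℝ × ℝ)) (ξ : ℝ) : (phases Λ ξ).encard = (Img Λ ξ).encard :=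
  (injOn_cexpEta.mono fun _ hη ↦ hη.1).encard_image

lemma cexpEta_mem_phases (hper : Periodic2 Λ) {η : ℝ} (hη : (ξ, η) ∈ Λ) :
    cexpEta η ∈ phases Λ ξ := by
  have hperiodic : Function.Periodic (fun t ↦ ((ξ, t) ∈ Λ, cexpEta t)) 2 := fun t ↦ by
    simp [← hper ξ t, periodic_cexpEta t]
  obtain ⟨t, ht, htη⟩ := hperiodic.exists_mem_Ico₀ two_pos η
  simp only [Prod.mk.injEq] at htη
  exact ⟨t, ⟨ht, htη.1 ▸ hη⟩, htη.2.symm⟩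

lemma phases_nonempty (hper : Periodic2 Λ) (hξ : ξ ∈ proj Λ) : (phases Λ ξ).Nonempty :=
  let ⟨_, hη⟩ := hξ
  ⟨_, cexpEta_mem_phases hper hη⟩

lemma upperHemicontinuous_phases (hclosed : IsClosed Λ) (hper : Periodic2 Λ) :
    UpperHemicontinuous (phases Λ) := by
  convert upperHemicontinuous_image_fibre hclosed (isCompact_Icc (a := 0) (b := 2))
    continuous_cexpEta using 2 with ξ
  have hsub : Img Λ ξ ⊆ {η | η ∈ Set.Icc 0 2 ∧ (ξ, η) ∈ Λ} :=
    fun η hη ↦ ⟨Set.Ico_subset_Icc_self hη.1, hη.2⟩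
  refine (Set.image_mono hsub).antisymm ?_
  rintro _ ⟨η, hη, rfl⟩
  exact cexpEta_mem_phases hper hη.2

lemma mem_projExact_iff {k : ℕ} (hk : k ≠ 0) : ξ ∈ projExact Λ k ↔ (phases Λ ξ).encard = k := by
  rw [encard_phases]
  refine ⟨And.right, fun h ↦ ⟨?_, h⟩⟩
  obtain ⟨η, hη⟩ := Set.encard_ne_zero.1 (by rw [h]; exact_mod_cast hk)
  exact ⟨η, hη.2⟩

lemma eq_of_mem_projExact {j k : ℕ} (hj : ξ ∈ projExact Λ j) (hk : ξ ∈ projExact Λ k) :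
    j = k := by
  exact_mod_cast hj.2.symm.trans hk.2

end Phases

/-- Near `ξ₀`, the phases of `Λ` over points of `E` are roots of a monic polynomial of degree `m`
whose lower coefficients are Fourier transforms of `L¹` functions. This is the condition common to
`Pmem` and `projStarNe`. -/
def HasLocalRelation (Λ : Set (ℝ × ℝ)) (E : Set ℝ) (ξ₀ : ℝ) (m : ℕ) : Prop :=
  ∃ φ : Fin m → ℝ → ℂ, (∀ i, Integrable (φ i)) ∧
    ∀ᶠ ξ in 𝓝 ξ₀, ξ ∈ E → ∀ z ∈ phases Λ ξ, (monicOfCoeffs fun i ↦ FT (φ i) ξ).IsRoot z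

section LocalRelation

variable {Λ : Set (ℝ × ℝ)} {ξ₀ : ℝ} {n k : ℕ}

lemma HasLocalRelation.mono {E F : Set ℝ} {m : ℕ} (h : HasLocalRelation Λ E ξ₀ m)
    (hFE : ∀ᶠ ξ in 𝓝 ξ₀, ξ ∈ F → ξ ∈ E) : HasLocalRelation Λ F ξ₀ m := by
  obtain ⟨φ, hφ, hroot⟩ := h
  exact ⟨φ, hφ, by filter_upwards [hFE, hroot] with ξ hξ hrootξ hF using hrootξ (hξ hF)⟩

lemma hasLocalRelation_of_mem_projOneStar (h : ξ₀ ∈ projOneStar Λ n) :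
    HasLocalRelation Λ (projExact Λ 1) ξ₀ (n - 1) := by
  obtain ⟨-, χ, hχ, a, b, hab, φ, hφ, hrel⟩ := h
  refine ⟨φ, hφ, ?_⟩
  filter_upwards [Ioo_mem_nhds hab.1 hab.2] with ξ hξ hξE
  rintro _ ⟨η, hη, rfl⟩
  rw [IsRoot, eval_monicOfCoeffs, ← hχ ξ hξE η hη, add_comm]
  exact hrel ξ ⟨hξ, hξE⟩

lemma hasLocalRelation_of_mem_projStarNe (h : ξ₀ ∈ projStarNe Λ k) :
    HasLocalRelation Λ (projExact Λ k) ξ₀ k := by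
  obtain ⟨-, a, b, hab, φ, hφ, hrel⟩ := h
  refine ⟨φ, hφ, ?_⟩
  filter_upwards [Ioo_mem_nhds hab.1 hab.2] with ξ hξ hξE
  rintro _ ⟨η, hη, rfl⟩
  rw [IsRoot, eval_monicOfCoeffs, hrel ξ ⟨hξ, hξE⟩ η hη, add_neg_cancel]

lemma projStarNeGen_subset_projExact (Λ : Set (ℝ × ℝ)) (n k : ℕ) :
    projStarNeGen Λ n k ⊆ projExact Λ k := by
  intro ξ hξ
  unfold projStarNeGen at hξ
  split_ifs at hξ with hk
  · exact hk ▸ hξ.1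
  · exact hξ.1

lemma exists_hasLocalRelation_of_mem_projStarNeGen (hk : k < n) (h : ξ₀ ∈ projStarNeGen Λ n k) :
    ∃ m < n, HasLocalRelation Λ (projExact Λ k) ξ₀ m := by
  unfold projStarNeGen at h
  split_ifs at h with hk1
  · subst hk1
    exact ⟨n - 1, by omega, hasLocalRelation_of_mem_projOneStar h⟩
  · exact ⟨k, hk, hasLocalRelation_of_mem_projStarNe h⟩

lemma HasLocalRelation.eventually_le_encard_phases (hclosed : IsClosed Λ) (hper : Periodic2 Λ)
    (hk : k ≠ 0) (hξ₀ : ξ₀ ∈ projExact Λ k) (h : HasLocalRelation Λ (projExact Λ k) ξ₀ k) :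
    ∀ᶠ ξ in 𝓝 ξ₀, ξ ∈ closure (projExact Λ k) → k ≤ (phases Λ ξ).encard := by
  obtain ⟨φ, hφ, hroot⟩ := h
  have hexact : projExact Λ k = {ξ | (phases Λ ξ).encard = k} :=
    Set.ext fun ξ ↦ mem_projExact_iff hk
  rw [hexact] at hξ₀ hroot ⊢
  refine eventually_le_encard_of_mem_closure (upperHemicontinuous_phases hclosed hper)
    (fun ξ ↦ monic_monicOfCoeffs fun i ↦ FT (φ i) ξ) (fun ξ ↦ natDegree_monicOfCoeffs _)
    (fun z ↦ ?_) hξ₀ hroot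
  have hcont (i) : Continuous (FT (φ i)) := continuous_FT (hφ i)
  simp only [eval_monicOfCoeffs]
  fun_prop

lemma eventually_le_encard_phases_of_mem_projStarNeGen (hclosed : IsClosed Λ)
    (hper : Periodic2 Λ) (hk : k ≠ 0) (h : ξ₀ ∈ projStarNeGen Λ n k) :
    ∀ᶠ ξ in 𝓝 ξ₀, ξ ∈ proj Λ → ξ ∈ closure (projExact Λ k) → k ≤ (phases Λ ξ).encard := by
  have hexact := projStarNeGen_subset_projExact Λ n k h
  unfold projStarNeGen at h
  split_ifs at h with hk1
  · subst hk1
    refine .of_forall fun ξ hξ _ ↦ ?_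
    exact_mod_cast Set.one_le_encard_iff_nonempty.2 (phases_nonempty hper hξ)
  · filter_upwards [(hasLocalRelation_of_mem_projStarNe h).eventually_le_encard_phases hclosed
      hper hk hexact] with ξ hξ _ using hξ

end LocalRelation

namespace IsHUP

variable {n : ℕ} {Λ : Set (ℝ × ℝ)}

lemma mono {m : ℕ} (hHUP : IsHUP n Λ) (hmn : m ≤ n) : IsHUP m Λ := by
  obtain ⟨d, rfl⟩ := Nat.exists_eq_add_of_le hmn
  intro f hf hvanish i
  have hzero := hHUP (Fin.append f 0) ?_ ?_ (Fin.castAdd d i)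
  · rwa [Fin.append_left] at hzero
  · exact Fin.addCases (by simpa using hf) (by simp)
  · intro ξ η hη
    simpa [Fin.sum_univ_add, FT_eq_zero_of_ae_eq_zero] using hvanish ξ η hη

theorem not_hasLocalRelation_proj {m : ℕ} (hHUP : IsHUP n Λ) (hper : Periodic2 Λ) (hm : m < n)
    (ξ₀ : ℝ) : ¬ HasLocalRelation Λ (proj Λ) ξ₀ m := by
  rintro ⟨φ, hφ, hroot⟩
  obtain ⟨g, hg, hg_supp, hg_one⟩ := exists_integrable_FT_bump hroot
  choose F hF hFT using fun i ↦ exists_integrable_FT_eq_mul (hφ i) hg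
  have hg_zero : g =ᵐ[volume] 0 := by
    have hzero := hHUP.mono hm (Fin.snoc F g) ?_ ?_ (Fin.last m)
    · rwa [Fin.snoc_last] at hzero
    · exact Fin.lastCases (by simpa using hg) (by simpa using hF)
    · intro ξ η hη
      have hfactor : ∑ i : Fin (m + 1), cexpEta η ^ (i : ℕ) *
          FT ((Fin.snoc F g : Fin (m + 1) → ℝ → ℂ) i) ξ =
            (monicOfCoeffs fun i ↦ FT (φ i) ξ).eval (cexpEta η) * FT g ξ := by
        simp only [Fin.sum_univ_castSucc, Fin.snoc_castSucc, Fin.snoc_last, Fin.val_castSucc,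
          Fin.val_last, hFT, eval_monicOfCoeffs, add_mul, Finset.sum_mul]
        rw [add_comm]
        simp only [mul_assoc, mul_left_comm]
      rw [hfactor, mul_eq_zero, or_iff_not_imp_right]
      intro hξ
      exact not_imp_comm.1 (hg_supp ξ) hξ ⟨η, hη⟩ _ (cexpEta_mem_phases hper hη)
  exact one_ne_zero (hg_one.symm.trans (FT_eq_zero_of_ae_eq_zero hg_zero ξ₀))

lemma notMem_projStarNeGen_of_encard_phases_le {k : ℕ} {U : Set ℝ} {ξ₀ : ℝ} (hHUP : IsHUP n Λ)
    (hclosed : IsClosed Λ) (hper : Periodic2 Λ) (hk : k ≠ 0) (hkn : k < n) (hU : U ∈ 𝓝 ξ₀)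
    (hdense : U ⊆ closure (projExact Λ k))
    (hle : ∀ ξ ∈ U ∩ proj Λ, (phases Λ ξ).encard ≤ k) : ξ₀ ∉ projStarNeGen Λ n k := by
  intro hξ₀
  obtain ⟨m, hm, hrel⟩ := exists_hasLocalRelation_of_mem_projStarNeGen hkn hξ₀
  refine hHUP.not_hasLocalRelation_proj hper hm ξ₀ (hrel.mono ?_)
  filter_upwards [hU, eventually_le_encard_phases_of_mem_projStarNeGen hclosed hper hk hξ₀]
    with ξ hξU hge hξ
  exact (mem_projExact_iff hk).2 ((hle ξ ⟨hξU, hξ⟩).antisymm (hge hξ (hdense hξU)))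

theorem not_subset_iUnion_projStarNeGen {k : ℕ} {U : Set ℝ} (hHUP : IsHUP n Λ)
    (hclosed : IsClosed Λ) (hper : Periodic2 Λ) (hkn : k < n) (hU : IsOpen U)
    (hne : U.Nonempty) : ¬ U ∩ proj Λ ⊆ ⋃ j ∈ Set.Icc 1 k, projStarNeGen Λ n j := by
  induction k generalizing U with
  | zero =>
    intro hsub
    obtain ⟨ξ₀, hξ₀⟩ := hne
    refine hHUP.not_hasLocalRelation_proj hper hkn ξ₀ ⟨Fin.elim0, fun i ↦ i.elim0, ?_⟩
    filter_upwards [hU.mem_nhds hξ₀] with ξ hξU hξ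
    simpa using hsub ⟨hξU, hξ⟩
  | succ k ih =>
    intro hsub
    have hstar {ξ} (hξ : ξ ∈ U ∩ proj Λ) : ∃ j, 1 ≤ j ∧ j ≤ k + 1 ∧ ξ ∈ projStarNeGen Λ n j := by
      simpa [and_assoc] using hsub hξ
    by_cases hdense : U ⊆ closure (projExact Λ (k + 1))
    · obtain ⟨ξ, hξ⟩ := hne
      obtain ⟨ξ₀, hξ₀U, hξ₀⟩ := mem_closure_iff.1 (hdense hξ) U hU hξ
      obtain ⟨j, -, -, hj⟩ := hstar ⟨hξ₀U, hξ₀.1⟩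
      obtain rfl := eq_of_mem_projExact (projStarNeGen_subset_projExact Λ n j hj) hξ₀
      refine hHUP.notMem_projStarNeGen_of_encard_phases_le hclosed hper k.succ_ne_zero hkn
        (hU.mem_nhds hξ₀U) hdense (fun ξ hξ ↦ ?_) hj
      obtain ⟨j, -, hjk, hj⟩ := hstar hξ
      rw [encard_phases, (projStarNeGen_subset_projExact Λ n j hj).2]
      exact_mod_cast hjk
    · refine ih (by omega) (hU.sdiff isClosed_closure) (Set.sdiff_nonempty.2 hdense) ?_
      rintro ξ ⟨⟨hξU, hξcl⟩, hξ⟩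
      obtain ⟨j, hj_pos, hjk, hj⟩ := hstar ⟨hξU, hξ⟩
      have hj_ne : j ≠ k + 1 := by
        rintro rfl
        exact hξcl (subset_closure (projStarNeGen_subset_projExact Λ n _ hj))
      exact Set.mem_biUnion (Set.mem_Icc.2 ⟨hj_pos, by omega⟩) hj

end IsHUP

theorem no_interval_in_union_of_stars (n : ℕ) (hn : 2 ≤ n) (Λ : Set (ℝ × ℝ))
    (hclosed : IsClosed Λ) (hper : Periodic2 Λ) (hHUP : IsHUP n Λ) :
    ∀ l : ℕ, 1 ≤ l → ∀ α : Fin l → ℕ, StrictMono α →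
      (∀ i, 1 ≤ α i ∧ α i ≤ n - 1) →
      ¬ ∃ a b : ℝ, a < b ∧ (Set.Ioo a b ∩ proj Λ).Nonempty ∧
        Set.Ioo a b ∩ proj Λ ⊆ ⋃ i : Fin l, projStarNeGen Λ n (α i) := by
  rintro l - α - hα ⟨a, b, hab, -, hsub⟩
  refine hHUP.not_subset_iUnion_projStarNeGen hclosed hper (by omega : n - 1 < n) isOpen_Ioo
    (Set.nonempty_Ioo.2 hab) (hsub.trans ?_)
  exact Set.iUnion_subset fun i ↦ Set.subset_biUnion_of_mem (u := projStarNeGen Λ n) (hα i)
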